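/- Let $C_k = \frac{1}{k!}\frac{1}{2\pi i}\int_{c-i\infty}^{c+i\infty} e^s\Big(\frac{(\log s+\gamma)^k}{s^2} - \frac{k(\log s+\gamma)^{k-1}}{s^2}\Big)\,ds$ for $c>0$ and integers $k \ge 0$. Then for every complex $z$ with $|z| < 1$, $\sum_{k=0}^{\infty} C_k z^k = \frac{1}{2\pi i}\int_{c-i\infty}^{c+i\infty} e^s\,\frac{e^{\gamma z} s^z}{s^2}(1-z)\,ds = \frac{e^{\gamma z}(1-z)}{\Gamma(2-z)} = \frac{e^{\gamma z}}{\Gamma(1-z)}$. -/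

import Mathlib

open MeasureTheory Filter Topology

/-!
For `0 < Re a` the Laplace transform of `t ^ (a - 1)` is `Γ(a) s ^ (-a)`: both sides are holomorphic
on the right half-plane and agree on the positive reals. With `a = 2 - z`, Fourier inversion on the
line `Re s = c`, evaluated at `t = 1`, turns this into
`(1 / 2πi) ∫ e ^ s s ^ (z - 2) ds = 1 / Γ(2 - z)`.

On the other hand `e ^ (γ z) s ^ z = exp (z (log s + γ))` may be expanded in powers of `z` under the
integral sign. The expansion is dominated by `exp (|z| |log s + γ|) / |s| ^ 2`, which is integrable
for `|z| < 1` because `exp (r |log s|) ≤ e ^ (r π) (|s| ^ r + |s| ^ (-r))`. The terms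
`-k (log s + γ) ^ (k - 1) / k!` contribute the same series multiplied by `-z`, hence the factor
`1 - z`.
-/

section LaplaceTransform

open Complex Set FourierTransform

variable {E : Type*} [NormedAddCommGroup E] [NormedSpace ℂ E] {f : ℝ → E} {s₀ s : ℂ}

/-- Absolute convergence of the one-sided Laplace integral of `f` at `s`. -/
def LaplaceConvergent (f : ℝ → E) (s : ℂ) : Prop :=
  IntegrableOn (fun t : ℝ ↦ exp (-s * t) • f t) (Ioi 0)

/-- The one-sided Laplace transform of `f`, with value `0` at the points where the integral
does not converge absolutely. -/
noncomputable def laplaceTransform (f : ℝ → E) (s : ℂ) : E :=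
  ∫ t : ℝ in Ioi 0, exp (-s * t) • f t

lemma norm_exp_neg_mul_ofReal (s : ℂ) (t : ℝ) : ‖exp (-s * t)‖ = Real.exp (-s.re * t) := by
  simp [norm_exp]

lemma LaplaceConvergent.aestronglyMeasurable (hf : LaplaceConvergent f s) :
    AEStronglyMeasurable f (volume.restrict (Ioi 0)) := by
  have hexp : Continuous fun t : ℝ ↦ exp (s * t) := by fun_prop
  refine (hexp.aestronglyMeasurable.smul (Integrable.aestronglyMeasurable hf)).congr
    (.of_forall fun t ↦ ?_)
  simp [smul_smul, ← Complex.exp_add]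

lemma LaplaceConvergent.mono (hf : LaplaceConvergent f s₀) (hs : s₀.re ≤ s.re) :
    LaplaceConvergent f s := by
  have hexp : Continuous fun t : ℝ ↦ exp (-s * t) := by fun_prop
  refine Integrable.mono hf (hexp.aestronglyMeasurable.smul hf.aestronglyMeasurable)
    (ae_restrict_of_forall_mem measurableSet_Ioi fun t (ht : 0 < t) ↦ ?_)
  rw [norm_smul, norm_smul, norm_exp_neg_mul_ofReal, norm_exp_neg_mul_ofReal]
  gcongr

lemma mul_exp_neg_mul_le {δ x y : ℝ} (hδ : 0 < δ) (hxy : x + δ ≤ y) {t : ℝ} (ht : 0 ≤ t) :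
    t * Real.exp (-y * t) ≤ δ⁻¹ * Real.exp (-x * t) := by
  have hlin : t ≤ δ⁻¹ * Real.exp (δ * t) := by
    rw [le_inv_mul_iff₀ hδ]
    linarith [Real.add_one_le_exp (δ * t)]
  calc t * Real.exp (-y * t) ≤ δ⁻¹ * Real.exp (δ * t) * Real.exp (-(x + δ) * t) := by gcongr
    _ = δ⁻¹ * Real.exp (-x * t) := by
      rw [mul_assoc, ← Real.exp_add]
      ring_nf

theorem LaplaceConvergent.differentiableAt (hf : LaplaceConvergent f s₀) (hs : s₀.re < s.re) :
    DifferentiableAt ℂ (laplaceTransform f) s := by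
  obtain ⟨σ, hσ₀, hσ⟩ := exists_between hs
  have hmeas (z : ℂ) : AEStronglyMeasurable (fun t : ℝ ↦ exp (-z * t) • f t)
      (volume.restrict (Ioi 0)) :=
    (by fun_prop : Continuous fun t : ℝ ↦ exp (-z * t)).aestronglyMeasurable.smul
      hf.aestronglyMeasurable
  have hderiv (z : ℂ) (t : ℝ) :
      HasDerivAt (fun z : ℂ ↦ exp (-z * t) • f t) (-(t : ℂ) • exp (-z * t) • f t) z := by
    have hlin : HasDerivAt (fun z : ℂ ↦ -z * t) (-(t : ℂ)) z := by
      simpa using (hasDerivAt_id z).neg.mul_const (t : ℂ)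
    simpa [smul_smul, mul_comm] using hlin.cexp.smul_const (f t)
  have hbound : ∀ t ∈ Ioi (0 : ℝ), ∀ z ∈ {z : ℂ | σ < z.re},
      ‖-(t : ℂ) • exp (-z * t) • f t‖ ≤ (σ - s₀.re)⁻¹ * ‖exp (-s₀ * t) • f t‖ := by
    intro t (ht : 0 < t) z (hz : σ < z.re)
    rw [norm_smul, norm_smul, norm_smul, norm_neg, norm_real, Real.norm_of_nonneg ht.le,
      norm_exp_neg_mul_ofReal, norm_exp_neg_mul_ofReal, ← mul_assoc, ← mul_assoc]
    refine mul_le_mul_of_nonneg_right ?_ (norm_nonneg _)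
    exact mul_exp_neg_mul_le (sub_pos.2 hσ₀) (by linarith only [hz]) ht.le
  exact (hasDerivAt_integral_of_dominated_loc_of_deriv_le
    ((isOpen_lt continuous_const continuous_re).mem_nhds hσ) (.of_forall hmeas) (hf.mono hs.le)
    ((by fun_prop : Continuous fun t : ℝ ↦ -(t : ℂ)).aestronglyMeasurable.smul (hmeas s))
    (ae_restrict_of_forall_mem measurableSet_Ioi hbound) (hf.norm.const_mul _)
    (.of_forall fun t z _ ↦ hderiv z t)).2.differentiableAt

lemma fourier_indicator_exp_smul (f : ℝ → E) (c w : ℝ) :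
    𝓕 ((Ioi 0).indicator fun t : ℝ ↦ exp (-(c : ℂ) * t) • f t) w =
      laplaceTransform f (c + (2 * Real.pi * w : ℝ) * I) := by
  rw [Real.fourier_real_eq_integral_exp_smul, laplaceTransform,
    ← integral_indicator measurableSet_Ioi]
  refine integral_congr_ae (.of_forall fun t ↦ ?_)
  simp only [indicator_apply, smul_ite, smul_zero, smul_smul, ← Complex.exp_add]
  congr! 3
  push_cast
  ring

theorem LaplaceConvergent.integral_exp_smul_laplaceTransform [CompleteSpace E] {c x : ℝ}
    (hf : LaplaceConvergent f c) (hF : VerticalIntegrable (laplaceTransform f) c) (hx : 0 < x)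
    (hfx : ContinuousAt f x) :
    ∫ y : ℝ, exp ((c + y * I) * x) • laplaceTransform f (c + y * I) =
      (2 * Real.pi) • f x := by
  set g : ℝ → E := (Ioi 0).indicator fun t : ℝ ↦ exp (-(c : ℂ) * t) • f t
  have h2π : 0 < 2 * Real.pi := Real.two_pi_pos
  have hfourier : 𝓕 g = fun w : ℝ ↦ laplaceTransform f (c + (2 * Real.pi * w : ℝ) * I) :=
    funext (fourier_indicator_exp_smul f c)
  have hg_int : Integrable g := (integrable_indicator_iff measurableSet_Ioi).2 hf
  have hFg_int : Integrable (𝓕 g) := hfourier ▸ hF.comp_mul_left' h2π.ne'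
  have hg_eq : g =ᶠ[𝓝 x] fun t : ℝ ↦ exp (-(c : ℂ) * t) • f t := by
    filter_upwards [Ioi_mem_nhds hx] with t ht using indicator_of_mem ht _
  have hg_cont : ContinuousAt g x := by
    refine ContinuousAt.congr ?_ hg_eq.symm
    fun_prop
  have hinv : ∫ y : ℝ, exp (y * x * I) • laplaceTransform f (c + y * I) =
      (2 * Real.pi) • exp (-(c : ℂ) * x) • f x := by
    rw [← hg_eq.eq_of_nhds, ← hg_int.fourierInv_fourier_eq hFg_int hg_cont, Real.fourierInv_eq',
      hfourier, ← inv_smul_eq_iff₀ h2π.ne', ← abs_of_pos (inv_pos.2 h2π),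
      ← Measure.integral_comp_mul_left]
    simp [mul_assoc, mul_left_comm]
  calc ∫ y : ℝ, exp ((c + y * I) * x) • laplaceTransform f (c + y * I)
      = exp (c * x) • ∫ y : ℝ, exp (y * x * I) • laplaceTransform f (c + y * I) := by
        rw [← integral_smul]
        refine integral_congr_ae (.of_forall fun y ↦ ?_)
        simp only [smul_smul, ← Complex.exp_add]
        ring_nf
    _ = (2 * Real.pi) • f x := by
        rw [hinv, smul_comm, smul_smul, ← Complex.exp_add]
        simp

end LaplaceTransform

section Power

open Complex Set

variable {a s : ℂ}

lemma eqOn_re_pos_of_eq_ofReal {E : Type*} [NormedAddCommGroup E] [NormedSpace ℂ E]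
    [CompleteSpace E] {f g : ℂ → E} (hf : DifferentiableOn ℂ f {s | 0 < s.re})
    (hg : DifferentiableOn ℂ g {s | 0 < s.re}) (hfg : ∀ r : ℝ, 0 < r → f r = g r) :
    EqOn f g {s | 0 < s.re} := by
  have hopen : IsOpen {s : ℂ | 0 < s.re} := isOpen_lt continuous_const continuous_re
  have hofReal : Tendsto ((↑) : ℝ → ℂ) (𝓝[≠] 1) (𝓝[≠] 1) :=
    continuous_ofReal.continuousWithinAt.tendsto_nhdsWithin fun r hr ↦ by simpa using hr
  refine (hf.analyticOnNhd hopen).eqOn_of_preconnected_of_frequently_eq (hg.analyticOnNhd hopen)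
    (convex_halfSpace_re_gt 0).isPreconnected (by simp : (1 : ℂ) ∈ {s : ℂ | 0 < s.re})
    (hofReal.frequently (Eventually.frequently ?_))
  filter_upwards [nhdsWithin_le_nhds (Ioi_mem_nhds one_pos)] with r hr using hfg r hr

lemma laplaceConvergent_cpow (ha : 0 < a.re) (hs : 0 < s.re) :
    LaplaceConvergent (fun t : ℝ ↦ (t : ℂ) ^ (a - 1)) s := by
  have hreal := integrableOn_rpow_mul_exp_neg_mul_rpow (s := a.re - 1) (by linarith) one_pos hs
  refine Integrable.mono' hreal (ContinuousOn.aestronglyMeasurable ?_ measurableSet_Ioi)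
    (ae_restrict_of_forall_mem measurableSet_Ioi fun t (ht : 0 < t) ↦ ?_)
  · intro t ht
    exact ContinuousAt.continuousWithinAt (by fun_prop (disch := exact .inl ht))
  · rw [norm_smul, norm_exp_neg_mul_ofReal, norm_cpow_eq_rpow_re_of_pos ht, Real.rpow_one,
      sub_re, one_re, mul_comm]

lemma laplaceTransform_cpow_ofReal (ha : 0 < a.re) {r : ℝ} (hr : 0 < r) :
    laplaceTransform (fun t : ℝ ↦ (t : ℂ) ^ (a - 1)) r = (r : ℂ) ^ (-a) * Gamma a := by
  have harg : (r : ℂ).arg ≠ Real.pi := by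
    simpa [arg_ofReal_of_nonneg hr.le] using Real.pi_ne_zero.symm
  rw [cpow_neg, ← inv_cpow _ _ harg, ← one_div, ← integral_cpow_mul_exp_neg_mul_Ioi ha hr]
  simp [laplaceTransform, mul_comm]

theorem laplaceTransform_cpow (ha : 0 < a.re) (hs : 0 < s.re) :
    laplaceTransform (fun t : ℝ ↦ (t : ℂ) ^ (a - 1)) s = s ^ (-a) * Gamma a := by
  refine eqOn_re_pos_of_eq_ofReal (g := fun s ↦ s ^ (-a) * Gamma a) (fun z hz ↦ ?_) (fun z hz ↦ ?_)
    (fun r hr ↦ laplaceTransform_cpow_ofReal ha hr) hs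
  · obtain ⟨σ, hσ, hσz⟩ := exists_between (show 0 < z.re from hz)
    exact ((laplaceConvergent_cpow (s := σ) ha hσ).differentiableAt
      hσz).differentiableWithinAt
  · exact ((differentiableAt_id.cpow_const (.inl hz)).mul_const _).differentiableWithinAt

end Power

section VerticalLine

open Complex

variable {c : ℝ}

lemma add_mul_I_mem_slitPlane (hc : 0 < c) (y : ℝ) : (c + y * I : ℂ) ∈ slitPlane :=
  .inl (by simpa using hc)

lemma add_mul_I_ne_zero (hc : c ≠ 0) (y : ℝ) : (c + y * I : ℂ) ≠ 0 :=
  fun h ↦ hc (by simpa using congrArg re h)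

lemma verticalIntegrable_norm_rpow (hc : c ≠ 0) {p : ℝ} (hp : p < -1) :
    VerticalIntegrable (fun s ↦ ‖s‖ ^ p) c := by
  have hbracket : Integrable fun u : ℝ ↦ (1 + ‖u‖ ^ 2) ^ (p / 2) := by
    simpa using integrable_rpow_neg_one_add_norm_sq (E := ℝ) (μ := volume) (r := -p)
      (by rw [Module.finrank_self]; push_cast; linarith)
  refine ((hbracket.comp_div hc).const_mul (|c| ^ p)).congr (.of_forall fun y ↦ ?_)
  have hnorm : ‖(c + y * I : ℂ)‖ = |c| * √(1 + (y / c) ^ 2) := by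
    rw [norm_add_mul_I, ← Real.sqrt_sq_eq_abs, ← Real.sqrt_mul (sq_nonneg c)]
    congr 1
    field_simp
  beta_reduce
  rw [hnorm, Real.mul_rpow (abs_nonneg c) (Real.sqrt_nonneg _), Real.sqrt_eq_rpow,
    ← Real.rpow_mul (by positivity), Real.norm_eq_abs, sq_abs]
  ring_nf

lemma verticalIntegrable_cpow (hc : 0 < c) {w : ℂ} (hw : w.re < -1) :
    VerticalIntegrable (fun s ↦ s ^ w) c := by
  have hcont : Continuous fun y : ℝ ↦ (c + y * I : ℂ) ^ w :=
    Continuous.cpow (by fun_prop) continuous_const (add_mul_I_mem_slitPlane hc)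
  refine ((verticalIntegrable_norm_rpow hc.ne' hw).mul_const (Real.exp (Real.pi * |w.im|))).mono'
    hcont.aestronglyMeasurable (.of_forall fun y ↦ ?_)
  refine (norm_cpow_le _ _).trans ?_
  rw [div_eq_mul_inv, ← Real.exp_neg]
  gcongr
  calc -(arg (c + y * I) * w.im) ≤ |arg (c + y * I)| * |w.im| := by
        rw [← abs_mul]; exact neg_le_abs _
    _ ≤ Real.pi * |w.im| := by gcongr; exact abs_arg_le_pi _

lemma exp_mul_norm_log_le {r : ℝ} (hr : 0 ≤ r) {s : ℂ} (hs : s ≠ 0) :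
    Real.exp (r * ‖log s‖) ≤ Real.exp (r * Real.pi) * (‖s‖ ^ r + ‖s‖ ^ (-r)) := by
  have hlog : ‖log s‖ ≤ |Real.log ‖s‖| + Real.pi := by
    refine (norm_le_abs_re_add_abs_im _).trans ?_
    rw [log_re, log_im]
    gcongr
    exact abs_arg_le_pi s
  calc Real.exp (r * ‖log s‖) ≤ Real.exp (r * (|Real.log ‖s‖| + Real.pi)) := by gcongr
    _ = Real.exp (r * Real.pi) * Real.exp |Real.log ‖s‖ * r| := by
      rw [← Real.exp_add, abs_mul, abs_of_nonneg hr]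
      ring_nf
    _ ≤ Real.exp (r * Real.pi) * (‖s‖ ^ r + ‖s‖ ^ (-r)) := by
      rw [Real.rpow_def_of_pos (norm_pos_iff.2 hs), Real.rpow_def_of_pos (norm_pos_iff.2 hs),
        mul_neg]
      gcongr
      exact Real.exp_abs_le _

lemma verticalIntegrable_exp_norm_log_add_const_mul_norm_rpow (hc : 0 < c) (b : ℂ) {r p : ℝ}
    (hr : 0 ≤ r) (hrp : r + p < -1) :
    VerticalIntegrable (fun s ↦ Real.exp (r * ‖log s + b‖) * ‖s‖ ^ p) c := by
  have hpowers : VerticalIntegrable (fun s ↦ ‖s‖ ^ (r + p) + ‖s‖ ^ (-r + p)) c :=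
    (verticalIntegrable_norm_rpow hc.ne' hrp).add
      (verticalIntegrable_norm_rpow hc.ne' (by linarith))
  have hlog : Continuous fun y : ℝ ↦ log (c + y * I) :=
    Continuous.clog (by fun_prop) (add_mul_I_mem_slitPlane hc)
  have hpow : Continuous fun y : ℝ ↦ ‖(c + y * I : ℂ)‖ ^ p :=
    Continuous.rpow_const (by fun_prop) fun y ↦
      .inl (norm_ne_zero_iff.2 (add_mul_I_ne_zero hc.ne' y))
  refine (hpowers.const_mul (Real.exp (r * ‖b‖) * Real.exp (r * Real.pi))).mono'
    (by fun_prop : Continuous _).aestronglyMeasurable (.of_forall fun y ↦ ?_)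
  set s : ℂ := c + y * I
  have hs : s ≠ 0 := add_mul_I_ne_zero hc.ne' y
  have hs_norm : 0 < ‖s‖ := norm_pos_iff.2 hs
  rw [Real.norm_of_nonneg (by positivity)]
  calc Real.exp (r * ‖log s + b‖) * ‖s‖ ^ p
      ≤ Real.exp (r * (‖log s‖ + ‖b‖)) * ‖s‖ ^ p := by gcongr; exact norm_add_le _ _
    _ = Real.exp (r * ‖b‖) * Real.exp (r * ‖log s‖) * ‖s‖ ^ p := by
      rw [← Real.exp_add]; ring_nf
    _ ≤ Real.exp (r * ‖b‖) * (Real.exp (r * Real.pi) * (‖s‖ ^ r + ‖s‖ ^ (-r))) * ‖s‖ ^ p := by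
      gcongr; exact exp_mul_norm_log_le hr hs
    _ = Real.exp (r * ‖b‖) * Real.exp (r * Real.pi) * (‖s‖ ^ (r + p) + ‖s‖ ^ (-r + p)) := by
      rw [Real.rpow_add hs_norm, Real.rpow_add hs_norm]; ring

theorem integral_exp_mul_cpow_neg (hc : 0 < c) {a : ℂ} (ha : 1 < a.re) {x : ℝ} (hx : 0 < x) :
    ∫ y : ℝ, exp ((c + y * I) * x) * (c + y * I) ^ (-a) =
      2 * Real.pi * (x : ℂ) ^ (a - 1) / Gamma a := by
  have ha₀ : 0 < a.re := one_pos.trans ha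
  have hΓ : Gamma a ≠ 0 := Gamma_ne_zero_of_re_pos ha₀
  have htransform (y : ℝ) : laplaceTransform (fun t : ℝ ↦ (t : ℂ) ^ (a - 1)) (c + y * I) =
      (c + y * I) ^ (-a) * Gamma a :=
    laplaceTransform_cpow ha₀ (by simpa using hc)
  have hvertical : VerticalIntegrable (laplaceTransform fun t : ℝ ↦ (t : ℂ) ^ (a - 1)) c := by
    simp only [VerticalIntegrable, htransform]
    exact (verticalIntegrable_cpow hc (by simpa using ha)).mul_const _
  have hbromwich := (laplaceConvergent_cpow ha₀
    (by simpa using hc)).integral_exp_smul_laplaceTransform hvertical hx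
      (by fun_prop (disch := exact .inl hx))
  rw [eq_div_iff hΓ, ← integral_mul_const]
  simpa [htransform, mul_assoc] using hbromwich

end VerticalLine

section ExponentialMoments

variable {α : Type*} [MeasurableSpace α] {μ : Measure α} {w L : α → ℂ}

lemma integrable_mul_pow_of_integrable_exp_norm_mul {r : ℝ} (hr : 0 < r)
    (hw : AEStronglyMeasurable w μ) (hL : AEStronglyMeasurable L μ)
    (hexp : Integrable (fun x ↦ Real.exp (r * ‖L x‖) * ‖w x‖) μ) (k : ℕ) :
    Integrable (fun x ↦ w x * L x ^ k) μ := by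
  refine (hexp.const_mul (k.factorial / r ^ k)).mono' (hw.mul (hL.pow k)) (.of_forall fun x ↦ ?_)
  have hpow : ‖L x‖ ^ k ≤ k.factorial / r ^ k * Real.exp (r * ‖L x‖) := by
    have hk := Real.pow_div_factorial_le_exp (r * ‖L x‖) (by positivity) k
    rw [mul_pow, div_le_iff₀ (by positivity)] at hk
    rw [div_mul_eq_mul_div, le_div_iff₀ (by positivity)]
    linarith
  calc ‖w x * L x ^ k‖ = ‖L x‖ ^ k * ‖w x‖ := by rw [norm_mul, norm_pow, mul_comm]
    _ ≤ k.factorial / r ^ k * Real.exp (r * ‖L x‖) * ‖w x‖ := by gcongr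
    _ = k.factorial / r ^ k * (Real.exp (r * ‖L x‖) * ‖w x‖) := mul_assoc _ _ _

theorem hasSum_integral_mul_pow_div_factorial_mul_pow {z : ℂ} (hw : AEStronglyMeasurable w μ)
    (hL : AEStronglyMeasurable L μ)
    (hexp : Integrable (fun x ↦ Real.exp (‖z‖ * ‖L x‖) * ‖w x‖) μ) :
    HasSum (fun k : ℕ ↦ (∫ x, w x * L x ^ k ∂μ) / k.factorial * z ^ k)
      (∫ x, w x * Complex.exp (z * L x) ∂μ) := by
  have hbound (x : α) : HasSum (fun k : ℕ ↦ (‖z‖ * ‖L x‖) ^ k / k.factorial * ‖w x‖)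
      (Real.exp (‖z‖ * ‖L x‖) * ‖w x‖) := by
    simpa only [Real.exp_eq_exp_ℝ] using
      (NormedSpace.expSeries_div_hasSum_exp (‖z‖ * ‖L x‖)).mul_right ‖w x‖
  have hlim (x : α) : HasSum (fun k : ℕ ↦ w x * L x ^ k * (z ^ k / k.factorial))
      (w x * Complex.exp (z * L x)) := by
    rw [Complex.exp_eq_exp_ℂ]
    convert! (NormedSpace.expSeries_div_hasSum_exp (z * L x)).mul_left (w x) using 2 with k
    ring
  convert! hasSum_integral_of_dominated_convergence
    (fun k x ↦ (‖z‖ * ‖L x‖) ^ k / k.factorial * ‖w x‖)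
    (fun k ↦ (hw.mul (hL.pow k)).mul_const (z ^ k / k.factorial : ℂ))
    (fun k ↦ .of_forall fun x ↦ le_of_eq ?_) (.of_forall fun x ↦ (hbound x).summable)
    (by simpa only [(hbound _).tsum_eq] using hexp) (.of_forall hlim) using 2 with k
  · simp only [Pi.mul_apply, Pi.pow_apply, integral_mul_const]
    ring
  · simp only [Pi.mul_apply, Pi.pow_apply, norm_mul, norm_div, norm_pow, Complex.norm_natCast]
    ring

lemma hasSum_sub_mul_pred_div_factorial_mul_pow {𝕜 : Type*} [NormedField 𝕜] [CharZero 𝕜]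
    {a : ℕ → 𝕜} {z S : 𝕜}
    (h : HasSum (fun k : ℕ ↦ a k / k.factorial * z ^ k) S) :
    HasSum (fun k : ℕ ↦ (a k - k * a (k - 1)) / k.factorial * z ^ k) ((1 - z) * S) := by
  have hshift : HasSum (fun k : ℕ ↦ k * a (k - 1) / k.factorial * z ^ k) (z * S) := by
    rw [← hasSum_nat_add_iff' 1]
    convert! h.mul_left z using 1
    · funext k
      have hk : (k + 1 : 𝕜) ≠ 0 := by exact_mod_cast k.succ_ne_zero
      have hfact : (k.factorial : 𝕜) ≠ 0 := by exact_mod_cast k.factorial_ne_zero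
      simp only [Nat.factorial_succ, Nat.add_sub_cancel, Nat.cast_mul, Nat.cast_succ]
      field_simp
      ring
    · simp
  convert! h.sub hshift using 1
  · funext k
    ring
  · ring

end ExponentialMoments

section GeneratingFunction

open Complex

variable {c : ℝ} {z : ℂ}

lemma aestronglyMeasurable_exp_div_sq (hc : 0 < c) :
    AEStronglyMeasurable fun y : ℝ ↦ exp (c + y * I) / (c + y * I) ^ 2 :=
  (by fun_prop (disch := exact fun y ↦ pow_ne_zero 2 (add_mul_I_ne_zero hc.ne' y)) :
    Continuous _).aestronglyMeasurable

lemma aestronglyMeasurable_log_add_const (hc : 0 < c) (b : ℂ) :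
    AEStronglyMeasurable fun y : ℝ ↦ log (c + y * I) + b :=
  ((Continuous.clog (by fun_prop) (add_mul_I_mem_slitPlane hc)).add
    continuous_const).aestronglyMeasurable

lemma verticalIntegrable_exp_norm_log_add_const_mul_norm_exp_div_sq (hc : 0 < c) (b : ℂ) {r : ℝ}
    (hr₀ : 0 ≤ r) (hr₁ : r < 1) :
    VerticalIntegrable (fun s ↦ Real.exp (r * ‖log s + b‖) * ‖exp s / s ^ 2‖) c := by
  refine ((verticalIntegrable_exp_norm_log_add_const_mul_norm_rpow hc b (p := -2) hr₀
    (by linarith)).mul_const (Real.exp c)).congr (.of_forall fun y ↦ ?_)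
  have hre : (c + y * I : ℂ).re = c := by simp
  simp only [norm_div, norm_pow, norm_exp, Real.rpow_neg (norm_nonneg _), Real.rpow_ofNat, hre]
  ring

lemma verticalIntegrable_exp_div_sq_mul_log_add_const_pow (hc : 0 < c) (b : ℂ) (k : ℕ) :
    VerticalIntegrable (fun s ↦ exp s / s ^ 2 * (log s + b) ^ k) c :=
  integrable_mul_pow_of_integrable_exp_norm_mul one_half_pos (aestronglyMeasurable_exp_div_sq hc)
    (aestronglyMeasurable_log_add_const hc b)
    (verticalIntegrable_exp_norm_log_add_const_mul_norm_exp_div_sq hc b one_half_pos.le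
      one_half_lt_one) k

lemma integral_exp_mul_log_pow_sub (hc : 0 < c) (b : ℂ) (k : ℕ) :
    ∫ y : ℝ, exp (c + y * I) * ((log (c + y * I) + b) ^ k / (c + y * I) ^ 2 -
        k * (log (c + y * I) + b) ^ (k - 1) / (c + y * I) ^ 2) * I =
      ((∫ y : ℝ, exp (c + y * I) / (c + y * I) ^ 2 * (log (c + y * I) + b) ^ k) -
        k * ∫ y : ℝ, exp (c + y * I) / (c + y * I) ^ 2 * (log (c + y * I) + b) ^ (k - 1)) * I := by
  rw [← integral_const_mul, ← integral_sub
    (verticalIntegrable_exp_div_sq_mul_log_add_const_pow hc b k)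
    ((verticalIntegrable_exp_div_sq_mul_log_add_const_pow hc b (k - 1)).const_mul _),
    ← integral_mul_const]
  congr with y
  ring

lemma exp_mul_exp_mul_cpow_div_sq {s : ℂ} (hs : s ≠ 0) (b z : ℂ) :
    exp s / s ^ 2 * exp (z * (log s + b)) = exp s * (exp (b * z) * s ^ z / s ^ 2) := by
  rw [cpow_def_of_ne_zero hs, ← exp_add, mul_add, add_comm, mul_comm z b, mul_comm z (log s)]
  ring

theorem hasSum_integral_exp_mul_log_pow_sub (hc : 0 < c) (b : ℂ) (hz : ‖z‖ < 1) :
    HasSum (fun k : ℕ ↦ 1 / k.factorial * (1 / (2 * Real.pi * I)) *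
        (∫ y : ℝ, exp (c + y * I) * ((log (c + y * I) + b) ^ k / (c + y * I) ^ 2 -
          k * (log (c + y * I) + b) ^ (k - 1) / (c + y * I) ^ 2) * I) * z ^ k)
      (1 / (2 * Real.pi * I) * ∫ y : ℝ, exp (c + y * I) *
        (exp (b * z) * (c + y * I) ^ z / (c + y * I) ^ 2) * (1 - z) * I) := by
  have hmoments := hasSum_integral_mul_pow_div_factorial_mul_pow
    (aestronglyMeasurable_exp_div_sq hc) (aestronglyMeasurable_log_add_const hc b)
    (verticalIntegrable_exp_norm_log_add_const_mul_norm_exp_div_sq hc b (norm_nonneg z) hz)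
  simp only [exp_mul_exp_mul_cpow_div_sq (add_mul_I_ne_zero hc.ne' _)] at hmoments
  convert! (hasSum_sub_mul_pred_div_factorial_mul_pow hmoments).mul_left
    (1 / (2 * Real.pi * I) * I) using 1
  · funext k
    rw [integral_exp_mul_log_pow_sub hc]
    ring
  · rw [integral_mul_const, integral_mul_const]
    ring

theorem integral_exp_mul_exp_mul_cpow_div_sq (hc : 0 < c) (b : ℂ) (hz : z.re < 1) :
    1 / (2 * Real.pi * I) * ∫ y : ℝ, exp (c + y * I) *
        (exp (b * z) * (c + y * I) ^ z / (c + y * I) ^ 2) * (1 - z) * I =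
      exp (b * z) * (1 - z) / Gamma (2 - z) := by
  have hbromwich := integral_exp_mul_cpow_neg hc (a := 2 - z)
    (by rw [sub_re, re_ofNat]; linarith) one_pos
  have hpow (y : ℝ) : (c + y * I : ℂ) ^ (-(2 - z)) = (c + y * I) ^ z / (c + y * I) ^ 2 := by
    rw [neg_sub, cpow_sub _ _ (add_mul_I_ne_zero hc.ne' y), cpow_ofNat]
  simp only [hpow, ofReal_one, mul_one, one_cpow] at hbromwich
  have hπ : (Real.pi : ℂ) ≠ 0 := ofReal_ne_zero.2 Real.pi_ne_zero
  simp only [integral_mul_const, mul_div_assoc, mul_left_comm (exp _) (exp (b * z)),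
    integral_const_mul, hbromwich]
  field_simp

lemma one_sub_div_Gamma_two_sub (z : ℂ) : (1 - z) / Gamma (2 - z) = 1 / Gamma (1 - z) := by
  rw [one_div, one_div_Gamma_eq_self_mul_one_div_Gamma_add_one, div_eq_mul_inv]
  ring_nf

end GeneratingFunction

/-- with `C_k = (1/k!)(1/(2πi)) ∫_{c-i∞}^{c+i∞} e^s ((log s+γ)^k/s² -
k(log s+γ)^{k-1}/s²) ds` for `c > 0`, for every `z` with `|z| < 1`,
`∑ C_k z^k = (1/(2πi)) ∫_{c-i∞}^{c+i∞} e^s e^{γz} s^z (1-z)/s² ds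
= e^{γz}(1-z)/Γ(2-z) = e^{γz}/Γ(1-z)`. -/
theorem Ck_generating_function (c : ℝ) (hc : 0 < c) (C : ℕ → ℂ)
    (hC : ∀ k : ℕ, C k =
      (1 / (Nat.factorial k : ℂ)) * (1 / (2 * Real.pi * Complex.I)) *
        ∫ t : ℝ, Complex.exp ((c : ℂ) + t * Complex.I) *
          ((Complex.log ((c : ℂ) + t * Complex.I) +
              (Real.eulerMascheroniConstant : ℂ)) ^ k / ((c : ℂ) + t * Complex.I) ^ 2 -
            (k : ℂ) * (Complex.log ((c : ℂ) + t * Complex.I) +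
              (Real.eulerMascheroniConstant : ℂ)) ^ (k - 1) / ((c : ℂ) + t * Complex.I) ^ 2) *
          Complex.I) :
    ∀ z : ℂ, ‖z‖ < 1 →
      HasSum (fun k : ℕ => C k * z ^ k)
        ((1 / (2 * Real.pi * Complex.I)) *
          ∫ t : ℝ, Complex.exp ((c : ℂ) + t * Complex.I) *
            (Complex.exp ((Real.eulerMascheroniConstant : ℂ) * z) *
              ((c : ℂ) + t * Complex.I) ^ z / ((c : ℂ) + t * Complex.I) ^ 2) * (1 - z) *
            Complex.I) ∧
      ((1 / (2 * Real.pi * Complex.I)) *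
          ∫ t : ℝ, Complex.exp ((c : ℂ) + t * Complex.I) *
            (Complex.exp ((Real.eulerMascheroniConstant : ℂ) * z) *
              ((c : ℂ) + t * Complex.I) ^ z / ((c : ℂ) + t * Complex.I) ^ 2) * (1 - z) *
            Complex.I)
        = Complex.exp ((Real.eulerMascheroniConstant : ℂ) * z) * (1 - z) /
            Complex.Gamma (2 - z) ∧
      Complex.exp ((Real.eulerMascheroniConstant : ℂ) * z) * (1 - z) /
          Complex.Gamma (2 - z)
        = Complex.exp ((Real.eulerMascheroniConstant : ℂ) * z) / Complex.Gamma (1 - z) := by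
  intro z hz
  refine ⟨?_, integral_exp_mul_exp_mul_cpow_div_sq hc _ ((Complex.re_le_norm z).trans_lt hz), ?_⟩
  · simpa only [hC] using hasSum_integral_exp_mul_log_pow_sub hc _ hz
  · rw [mul_div_assoc, one_sub_div_Gamma_two_sub, mul_one_div]
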